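/- arXiv:2505.00486 — 2 statements merged into one kernel-verified Lean document; each statement's English description precedes it below -/
import Mathlib

section
/- Let ℓ ≥ 1 and let T : Fin ℓ → ℤ be a sequence of positive integers (all T i ≥ 1) that is not 1-smooth. Then ∑_i T i ≥ 2ℓ. Moreover, ∑_i T i = 2ℓ holds if and only if the multiset of values of T is either {1 repeated ℓ − 1 times, together with the single value ℓ + 1} or {2 repeated ℓ times}. -/
/-- A nonempty sequence of positive integers is `1`-smooth if the set of sums of its
nonempty subsequences equals the integer interval `[1, total sum]`. -/
def IsOneSmooth {ℓ : ℕ} (T : Fin ℓ → ℤ) : Prop :=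
  {s : ℤ | ∃ S : Finset (Fin ℓ), S.Nonempty ∧ ∑ i ∈ S, T i = s} = Set.Icc 1 (∑ i, T i)

/-!
Call an index `j` a gap if `T j ≥ 2 + σ`, where `σ` is the sum of the terms smaller than `T j`.
Without gaps, adding the terms in increasing order keeps the subset sums an initial interval, so
a sequence that is not `1`-smooth has a gap `j`. Let `b` terms be smaller than `T j` and `c ≥ 1`
terms be at least `T j`. As `σ ≥ b`, the total is at least
`σ + c (2 + σ) ≥ 2 c + (1 + c) b = 2 (b + c) + (c - 1) b ≥ 2 (b + c)`. In case of equality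
`(c - 1) b = 0`: either `b = 0` and all terms are `2`, or `c = 1` and the terms other than `T j`
are all `1`.
-/

open Finset

section Finset

variable {ι M : Type*}

lemma card_filter_lt_add_card_filter_le [LinearOrder M] (s : Finset ι) (T : ι → M) (a : M) :
    #{i ∈ s | T i < a} + #{i ∈ s | a ≤ T i} = #s := by
  simpa only [not_lt] using card_filter_add_card_filter_not (s := s) (fun i => T i < a)

lemma one_le_card_filter_le [LinearOrder M] {s : Finset ι} {j : ι} (hj : j ∈ s) (T : ι → M) :
    1 ≤ #{i ∈ s | T j ≤ T i} :=
  card_pos.mpr ⟨j, mem_filter.mpr ⟨hj, le_rfl⟩⟩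

lemma card_le_sum_of_one_le [AddCommMonoidWithOne M] [PartialOrder M] [IsOrderedAddMonoid M]
    {s : Finset ι} {T : ι → M} (hT : ∀ i ∈ s, 1 ≤ T i) : (#s : M) ≤ ∑ i ∈ s, T i := by
  simpa only [nsmul_one] using card_nsmul_le_sum s T 1 hT

variable [AddCommMonoid M]

lemma sum_filter_lt_add_card_nsmul_le_sum [LinearOrder M] [IsOrderedAddMonoid M]
    (s : Finset ι) (T : ι → M) (a : M) :
    ∑ i ∈ s with T i < a, T i + #{i ∈ s | a ≤ T i} • a ≤ ∑ i ∈ s, T i := by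
  rw [← sum_filter_add_sum_filter_not s (fun i => T i < a)]
  simp only [not_lt]
  gcongr
  exact card_nsmul_le_sum _ _ _ fun i hi => (mem_filter.mp hi).2

lemma map_eq_replicate_of_sum_eq_card_nsmul [PartialOrder M] [IsOrderedCancelAddMonoid M]
    {s : Finset ι} {T : ι → M} {a : M} (hle : ∀ i ∈ s, a ≤ T i) (hsum : ∑ i ∈ s, T i = #s • a) :
    s.val.map T = Multiset.replicate #s a := by
  have heq : ∀ i ∈ s, a = T i :=
    (sum_eq_sum_iff_of_le hle).mp (by rw [sum_const, hsum])
  rw [card_def, ← Multiset.map_const']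
  exact Multiset.map_congr rfl fun i hi => (heq i hi).symm

end Finset

section Gap

variable {ι M : Type*} [AddCommMonoidWithOne M] [LinearOrder M] {T : ι → M} {s : Finset ι} {j : ι}

/-- The index `j` is a gap of the family `T` on `s`: its value exceeds by at least `2` the sum of
all smaller values on `s`. For positive integers, `T j - 1` is then too large to be a sum of
smaller values on `s` and too small for any other sum. The index `j` need not belong to `s`. -/
def IsGap (T : ι → M) (s : Finset ι) (j : ι) : Prop :=
  2 + ∑ i ∈ s with T i < T j, T i ≤ T j

lemma isGap_insert_iff_of_le [DecidableEq ι] {m : ι} (h : T j ≤ T m) :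
    IsGap T (insert m s) j ↔ IsGap T s j := by
  rw [IsGap, IsGap, filter_insert, if_neg h.not_gt]

end Gap

namespace IsGap

variable {ι R : Type*} [CommRing R] [LinearOrder R] [IsStrictOrderedRing R] {T : ι → R}
  {s : Finset ι} {j : ι}

lemma two_mul_card_add_le_sum (hj : IsGap T s j) (hT : ∀ i ∈ s, 1 ≤ T i) :
    2 * (#s : R) + (#{i ∈ s | T j ≤ T i} - 1) * #{i ∈ s | T i < T j} ≤ ∑ i ∈ s, T i := by
  set b := (#{i ∈ s | T i < T j} : R)
  set c := (#{i ∈ s | T j ≤ T i} : R)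
  set σ := ∑ i ∈ s with T i < T j, T i
  have hσ : b ≤ σ := card_le_sum_of_one_le fun i hi => hT i (mem_filter.mp hi).1
  have hcard : b + c = #s := by
    rw [← card_filter_lt_add_card_filter_le s T (T j), Nat.cast_add]
  have hc₀ : 0 ≤ c := Nat.cast_nonneg _
  calc 2 * (#s : R) + (c - 1) * b = b + c * (2 + b) := by rw [← hcard]; ring
    _ ≤ σ + c * (2 + σ) := by gcongr
    _ ≤ σ + c * T j := by gcongr; exact hj
    _ ≤ ∑ i ∈ s, T i := by
        simpa only [nsmul_eq_mul] using sum_filter_lt_add_card_nsmul_le_sum s T (T j)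

lemma two_mul_card_le_sum (hj : IsGap T s j) (hjs : j ∈ s) (hT : ∀ i ∈ s, 1 ≤ T i) :
    2 * (#s : R) ≤ ∑ i ∈ s, T i := by
  have hc : (1 : R) ≤ #{i ∈ s | T j ≤ T i} :=
    Nat.one_le_cast.mpr (one_le_card_filter_le hjs T)
  have hslack := mul_nonneg (sub_nonneg.mpr hc) (Nat.cast_nonneg #{i ∈ s | T i < T j})
  linarith [hj.two_mul_card_add_le_sum hT]

lemma map_eq_replicate_two (hj : IsGap T s j) (hmin : ∀ i ∈ s, T j ≤ T i)
    (hsum : ∑ i ∈ s, T i = 2 * #s) : s.val.map T = Multiset.replicate #s 2 := by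
  have htwo : 2 ≤ T j := by
    simpa only [IsGap, filter_false_of_mem fun i hi => (hmin i hi).not_gt, sum_empty, add_zero]
      using hj
  refine map_eq_replicate_of_sum_eq_card_nsmul (fun i hi => htwo.trans (hmin i hi)) ?_
  rw [hsum, nsmul_eq_mul, mul_comm]

lemma map_eq_replicate_one_add_singleton (hj : IsGap T s j) (hT : ∀ i ∈ s, 1 ≤ T i)
    (hmax : {i ∈ s | T j ≤ T i} = {j}) (hsum : ∑ i ∈ s, T i = 2 * #s) :
    s.val.map T = Multiset.replicate (#s - 1) 1 + {(#s : R) + 1} := by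
  set B : Finset ι := {i ∈ s | T i < T j} with hB
  have hT_B : ∀ i ∈ B, 1 ≤ T i := fun i hi => hT i (mem_filter.mp hi).1
  have hcompl : {i ∈ s | ¬ T i < T j} = {j} := by simpa only [not_lt] using hmax
  have hcard : #B + 1 = #s := by
    rw [← card_filter_lt_add_card_filter_le s T (T j), hmax, card_singleton]
  have hcardR : (#B : R) + 1 = #s := by exact_mod_cast hcard
  have hsplit : ∑ i ∈ B, T i + T j = 2 * #s := by
    rw [← hsum, ← sum_filter_add_sum_filter_not s (fun i => T i < T j), hcompl, sum_singleton]
  have hgap : 2 + ∑ i ∈ B, T i ≤ T j := hj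
  have hsum_B : ∑ i ∈ B, T i = #B := by linarith [card_le_sum_of_one_le hT_B]
  have hTj : T j = #s + 1 := by linarith
  have hones : B.val.map T = Multiset.replicate #B 1 :=
    map_eq_replicate_of_sum_eq_card_nsmul hT_B (by rw [hsum_B, nsmul_one])
  calc s.val.map T = B.val.map T + ({i ∈ s | ¬ T i < T j} : Finset ι).val.map T := by
        rw [← Multiset.map_add, hB, filter_val, filter_val, Multiset.filter_add_not]
    _ = Multiset.replicate (#s - 1) 1 + {(#s : R) + 1} := by
        rw [hcompl, hones, singleton_val, Multiset.map_singleton, hTj, ← hcard,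
          Nat.add_sub_cancel]

lemma sum_eq_two_mul_card_iff (hj : IsGap T s j) (hjs : j ∈ s) (hT : ∀ i ∈ s, 1 ≤ T i) :
    ∑ i ∈ s, T i = 2 * #s ↔
      s.val.map T = Multiset.replicate (#s - 1) 1 + {(#s : R) + 1} ∨
        s.val.map T = Multiset.replicate #s 2 := by
  constructor
  · intro hsum
    have hc : (1 : R) ≤ #{i ∈ s | T j ≤ T i} :=
      Nat.one_le_cast.mpr (one_le_card_filter_le hjs T)
    have hslack : ((#{i ∈ s | T j ≤ T i} : R) - 1) * #{i ∈ s | T i < T j} = 0 :=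
      le_antisymm (by linarith [hj.two_mul_card_add_le_sum hT])
        (mul_nonneg (sub_nonneg.mpr hc) (Nat.cast_nonneg _))
    rcases mul_eq_zero.mp hslack with hone | hzero
    · obtain ⟨k, hk⟩ := card_eq_one.mp (Nat.cast_eq_one.mp (sub_eq_zero.mp hone))
      obtain rfl : j = k := mem_singleton.mp (hk ▸ mem_filter.mpr ⟨hjs, le_rfl⟩)
      exact .inl (hj.map_eq_replicate_one_add_singleton hT hk hsum)
    · have hempty := card_eq_zero.mp (Nat.cast_eq_zero.mp hzero)
      exact .inr (hj.map_eq_replicate_two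
        (fun i hi => not_lt.mp (filter_eq_empty_iff.mp hempty hi)) hsum)
  · have hcard : 1 ≤ #s := card_pos.mpr ⟨j, hjs⟩
    rw [← sum_map_val]
    rintro (h | h) <;> rw [h]
    · rw [Multiset.sum_add, Multiset.sum_replicate, Multiset.sum_singleton, nsmul_one,
        Nat.cast_sub hcard]
      ring
    · rw [Multiset.sum_replicate, nsmul_eq_mul, mul_comm]

end IsGap

lemma exists_subset_sum_eq_of_forall_not_isGap {ι : Type*} {T : ι → ℤ} {s : Finset ι}
    (hT : ∀ i ∈ s, 0 ≤ T i) (hgap : ∀ j ∈ s, ¬ IsGap T s j) {n : ℤ} (hn₀ : 0 ≤ n)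
    (hn : n ≤ ∑ i ∈ s, T i) : ∃ S ⊆ s, ∑ i ∈ S, T i = n := by
  classical
  induction s using Finset.induction_on_max_value T generalizing n with
  | empty => exact ⟨∅, Subset.rfl, le_antisymm hn₀ hn⟩
  | insert m s hm hmax ih =>
    have hT_s : ∀ i ∈ s, 0 ≤ T i := fun i hi => hT i (mem_insert_of_mem hi)
    have hgap_s : ∀ j ∈ s, ¬ IsGap T s j := fun j hj =>
      (isGap_insert_iff_of_le (hmax j hj)).not.mp (hgap j (mem_insert_of_mem hj))
    rcases le_or_gt n (∑ i ∈ s, T i) with hle | hgt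
    · obtain ⟨S, hS, hsum⟩ := ih hT_s hgap_s hn₀ hle
      exact ⟨S, hS.trans (subset_insert m s), hsum⟩
    · have hm_le : T m ≤ 1 + ∑ i ∈ s, T i := by
        have hm_gap : ¬ 2 + ∑ i ∈ s with T i < T m, T i ≤ T m :=
          (isGap_insert_iff_of_le le_rfl).not.mp (hgap m (mem_insert_self m s))
        have hfilter : ∑ i ∈ s with T i < T m, T i ≤ ∑ i ∈ s, T i :=
          sum_le_sum_of_subset_of_nonneg (filter_subset _ _) fun i hi _ => hT_s i hi
        omega
      rw [sum_insert hm] at hn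
      obtain ⟨S, hS, hsum⟩ := ih hT_s hgap_s (n := n - T m) (by omega) (by omega)
      refine ⟨insert m S, insert_subset_insert m hS, ?_⟩
      rw [sum_insert (notMem_mono hS hm), hsum, add_sub_cancel]

lemma isOneSmooth_of_forall_not_isGap {ℓ : ℕ} {T : Fin ℓ → ℤ} (hpos : ∀ i, 1 ≤ T i)
    (hgap : ∀ j, ¬ IsGap T univ j) : IsOneSmooth T := by
  have hnonneg : ∀ i, 0 ≤ T i := fun i => zero_le_one.trans (hpos i)
  ext n
  constructor
  · rintro ⟨S, ⟨k, hk⟩, rfl⟩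
    exact ⟨(hpos k).trans (single_le_sum (fun i _ => hnonneg i) hk),
      sum_le_univ_sum_of_nonneg hnonneg⟩
  · rintro ⟨hn₁, hn⟩
    obtain ⟨S, -, hsum⟩ := exists_subset_sum_eq_of_forall_not_isGap (fun i _ => hnonneg i)
      (fun j _ => hgap j) (zero_le_one.trans hn₁) hn
    exact ⟨S, nonempty_of_sum_ne_zero (by rw [hsum]; omega), hsum⟩

theorem stmt18 {ℓ : ℕ} (hℓ : 1 ≤ ℓ) (T : Fin ℓ → ℤ) (hpos : ∀ i, 1 ≤ T i)
    (hns : ¬ IsOneSmooth T) :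
    2 * (ℓ : ℤ) ≤ ∑ i, T i ∧
      ((∑ i, T i) = 2 * (ℓ : ℤ) ↔
        (Finset.univ.val.map T =
            Multiset.replicate (ℓ - 1) (1 : ℤ) + {((ℓ : ℤ) + 1)} ∨
          Finset.univ.val.map T = Multiset.replicate ℓ (2 : ℤ))) := by
  obtain ⟨j, hj⟩ : ∃ j, IsGap T univ j := by
    by_contra! hgap
    exact hns (isOneSmooth_of_forall_not_isGap hpos hgap)
  have hle := hj.two_mul_card_le_sum (mem_univ j) fun i _ => hpos i
  have hiff := hj.sum_eq_two_mul_card_iff (mem_univ j) fun i _ => hpos i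
  rw [card_fin] at hle hiff
  exact ⟨hle, hiff⟩
end

section
/- Let n ≥ 1 and let δ be an integer with 1 ≤ δ and 4(δ − 1) ≤ n. Let T : Fin ℓ → ZMod n be a sequence such that the number of subsets S ⊆ Fin ℓ (including the empty set) with ∑_{i∈S} T i = 0 is strictly less than 2^(ℓ − n + 1 + δ). Then there exist g ∈ ZMod n of additive order n, natural numbers u ≥ v with u + v = n − 2δ + 1, w = ℓ − n + δ, and integers x₁, …, x_{δ−1}, y₁, …, y_w with −n/2 < x_i ≤ n/2, −n/2 < y_j ≤ n/2 and x_i ≠ 0 for all i, j, such that ∑_{i=1}^{δ−1} |x_i| ≤ 2δ − 2 and the multiset of values {T i : i ∈ Fin ℓ} equals the multiset consisting of u copies of g, v copies of −g, the elements x_i • g for i = 1, …, δ − 1, and the elements y_j • g for j = 1, …, w. -/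
/-!
By a bound of Olson, the number of zero-sum subsets of a sequence of length `ℓ` is at least
`2 ^ (ℓ - k)`, where `k` is the largest length of a zero-sum free sequence obtained from a
subsequence by changing signs. With few zero-sum subsets there is thus a zero-sum free signed
subsequence of length `n - δ`, where `n` is the order of the group.

By Scherk's theorem, the number of nonzero subset sums is superadditive over disjoint parts of a
zero-sum free sequence. A single term contributes one such sum, two distinct values three, and three
distinct values five. As there are at most `n - 1` nonzero sums, some value `g` occurs at least
`n - 2δ + 1` times, and it has order `n` because the multiples of an element of order `n / 2` leave
room for at most one further term. Every other term has the form `c • g` with `0 < c < n`. When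
these are added to the copies of `g` one at a time, the subset sums keep filling an interval of
multiples of `g` that never reaches `n • g`, so the coefficients outside `n - 2δ + 1` copies of `g`
have sum at most `2δ - 2`. It remains to undo the sign changes.
-/

open Finset
open scoped Pointwise

section Definitions

variable {ι G : Type*} [AddCommGroup G]

/-- The family `F`, restricted to `J`, is zero-sum free: no nonempty subset of `J` has sum `0`. -/
def ZeroSumFree (F : ι → G) (J : Finset ι) : Prop :=
  ∀ S ⊆ J, ∑ i ∈ S, F i = 0 → S = ∅

/-- The set `Σ(F, J)` of sums of subsets of `J`. It contains `0`, the sum of the empty subset. -/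
def subsetSums [DecidableEq G] (F : ι → G) (J : Finset ι) : Finset G :=
  J.powerset.image fun S => ∑ i ∈ S, F i

/-- The number `N_z(F, J)` of subsets of `J` with sum `z`. -/
def sumCount [DecidableEq G] (F : ι → G) (J : Finset ι) (z : G) : ℕ :=
  #{S ∈ J.powerset | ∑ i ∈ S, F i = z}

end Definitions

section ZeroSumFree

variable {ι G : Type*} [AddCommGroup G] {F : ι → G} {J K : Finset ι} {i j k : ι}

namespace ZeroSumFree

theorem mono (h : ZeroSumFree F J) (hK : K ⊆ J) : ZeroSumFree F K :=
  fun S hS => h S (hS.trans hK)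

theorem sum_ne_zero (h : ZeroSumFree F J) (hK : K ⊆ J) (hne : K.Nonempty) :
    ∑ i ∈ K, F i ≠ 0 :=
  fun h0 => hne.ne_empty (h K hK h0)

theorem ne_zero (h : ZeroSumFree F J) (hi : i ∈ J) : F i ≠ 0 := by
  simpa using h.sum_ne_zero (singleton_subset_iff.2 hi) (singleton_nonempty i)

theorem add_ne_zero (h : ZeroSumFree F J) (hi : i ∈ J) (hj : j ∈ J) (hij : i ≠ j) :
    F i + F j ≠ 0 := by
  classical
  simpa [sum_pair hij] using
    h.sum_ne_zero (K := {i, j}) (by simp [insert_subset_iff, hi, hj]) (by simp)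

theorem add_add_ne_zero (h : ZeroSumFree F J) (hi : i ∈ J) (hj : j ∈ J) (hk : k ∈ J)
    (hij : i ≠ j) (hik : i ≠ k) (hjk : j ≠ k) : F i + F j + F k ≠ 0 := by
  classical
  simpa [sum_insert, hij, hik, hjk, add_assoc] using
    h.sum_ne_zero (K := {i, j, k}) (by simp [insert_subset_iff, hi, hj, hk]) (by simp)

theorem card_lt_addOrderOf {g : G} (h : ZeroSumFree F J) (hJ : ∀ i ∈ J, F i = g)
    (hg : IsOfFinAddOrder g) : #J < addOrderOf g := by
  by_contra! hle
  obtain ⟨S, hS, hcard⟩ := exists_subset_card_eq hle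
  refine h.sum_ne_zero hS (card_pos.1 (hcard ▸ hg.addOrderOf_pos)) ?_
  rw [sum_congr rfl fun i hi => hJ i (hS hi), sum_const, hcard, addOrderOf_nsmul_eq_zero]

end ZeroSumFree

end ZeroSumFree

section SumCount

variable {ι G : Type*} [AddCommGroup G] [DecidableEq G]

theorem sumCount_insert [DecidableEq ι] (F : ι → G) {J : Finset ι} {i : ι} (hi : i ∉ J) (z : G) :
    sumCount F (insert i J) z = sumCount F J z + sumCount F J (z - F i) := by
  simp only [sumCount, card_filter]
  rw [sum_powerset_insert hi]
  congr 1
  refine sum_congr rfl fun S hS => ?_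
  simp only [sum_insert fun h => hi (mem_powerset.1 hS h), eq_sub_iff_add_eq']

theorem sumCount_units_smul (F : ι → G) (ε : ι → ℤˣ) (J : Finset ι) (z : G) :
    sumCount (fun i => ε i • F i) J z = sumCount F J (z + ∑ i ∈ J with ε i = -1, F i) := by
  classical
  induction J using Finset.induction_on generalizing z with
  | empty =>
    simp only [sumCount, card_filter, powerset_empty, sum_singleton, sum_empty, filter_empty,
      add_zero]
    congr
  | insert i J hi ih =>
    rw [sumCount_insert _ hi, sumCount_insert _ hi, ih, ih, filter_insert]
    rcases Int.units_eq_one_or (ε i) with h | h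
    · simp [h, sub_add_eq_add_sub]
    · have hi' : i ∉ ({k ∈ J | ε k = -1} : Finset ι) := fun h => hi (filter_subset _ _ h)
      rw [if_pos h, sum_insert hi', h, Units.neg_smul, one_smul, sub_neg_eq_add, add_assoc,
        add_left_comm z, add_sub_cancel_left, add_comm]

theorem exists_sumCount_units_smul_eq (F : ι → G) {J S : Finset ι} (hS : S ⊆ J) :
    ∃ ε : ι → ℤˣ, sumCount (fun i => ε i • F i) J 0 = sumCount F J (∑ i ∈ S, F i) := by
  classical
  refine ⟨fun i => if i ∈ S then -1 else 1, ?_⟩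
  have hfilter : {i ∈ J | (if i ∈ S then -1 else 1 : ℤˣ) = -1} = S := by
    ext i
    simpa using fun hi : i ∈ S => hS hi
  rw [sumCount_units_smul, zero_add, hfilter]

/-- Olson's lower bound for the number of zero-sum subsets. If `i` lies in a zero-sum subset of `J`,
then `-F i` is a sum over a subset of `J \ {i}`, so in `N₀(J) = N₀(J \ {i}) + N_{-F i}(J \ {i})` the
second term, too, counts zero-sum subsets of `J \ {i}` after a change of signs. -/
theorem exists_zeroSumFree_two_pow_card_le (J : Finset ι) (F : ι → G) :
    ∃ ε : ι → ℤˣ, ∃ K ⊆ J, ZeroSumFree (fun i => ε i • F i) K ∧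
      2 ^ #J ≤ 2 ^ #K * sumCount F J 0 := by
  classical
  induction J using Finset.strongInduction generalizing F with
  | H J ih =>
  by_cases hfree : ZeroSumFree F J
  · have hpos : 0 < sumCount F J 0 := card_pos.2 ⟨∅, by simp⟩
    exact ⟨1, J, Subset.rfl, by simpa using hfree, Nat.le_mul_of_pos_right _ hpos⟩
  obtain ⟨S, hSJ, hS0, i, hiS⟩ : ∃ S ⊆ J, ∑ i ∈ S, F i = 0 ∧ S.Nonempty := by
    simpa [ZeroSumFree, nonempty_iff_ne_empty] using hfree
  have hi := hSJ hiS
  have hlt := erase_ssubset hi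
  obtain ⟨ε, hε⟩ := exists_sumCount_units_smul_eq F (erase_subset_erase i hSJ)
  have hneg : ∑ k ∈ S.erase i, F k = 0 - F i := by rw [sum_erase_eq_sub hiS, hS0]
  obtain ⟨ε₁, K₁, hK₁, hfree₁, hle₁⟩ := ih _ hlt F
  obtain ⟨ε₂, K₂, hK₂, hfree₂, hle₂⟩ := ih _ hlt fun k => ε k • F k
  have hcount : sumCount F J 0 =
      sumCount F (J.erase i) 0 + sumCount (fun k => ε k • F k) (J.erase i) 0 := by
    rw [hε, hneg, ← sumCount_insert F (notMem_erase i J), insert_erase hi]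
  have hbound {m : ℕ} (h₁ : #K₁ ≤ m) (h₂ : #K₂ ≤ m) : 2 ^ #J ≤ 2 ^ m * sumCount F J 0 := by
    rw [← card_erase_add_one hi, pow_succ, mul_two, hcount, mul_add]
    gcongr
    · exact hle₁.trans (Nat.mul_le_mul_right _ (Nat.pow_le_pow_right two_pos h₁))
    · exact hle₂.trans (Nat.mul_le_mul_right _ (Nat.pow_le_pow_right two_pos h₂))
  rcases le_total #K₁ #K₂ with h | h
  · exact ⟨fun k => ε₂ k * ε k, K₂, hK₂.trans hlt.1, by simpa only [mul_smul] using hfree₂,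
      hbound h le_rfl⟩
  · exact ⟨ε₁, K₁, hK₁.trans hlt.1, hfree₁, hbound le_rfl h⟩

end SumCount

section Scherk

variable {G : Type*} [AddCommGroup G]

theorem exists_add_notMem_of_neg_notMem {A : Finset G} {b : G} (hA : 0 ∈ A) (hb : -b ∉ A) :
    ∃ e ∈ A, e + b ∉ A := by
  by_contra! hclosed
  have hsub : (AddSubmonoid.multiples b : Set G) ⊆ A := by
    rintro _ ⟨k, rfl⟩
    induction k with
    | zero => simpa using hA
    | succ k ih => simpa [succ_nsmul] using hclosed _ ih
  have hfin : IsOfFinAddOrder b := finite_multiples.1 (A.finite_toSet.subset hsub)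
  exact hb (hsub (hfin.mem_multiples_iff_mem_zmultiples.2
    (neg_mem (AddSubgroup.mem_zmultiples b))))

/-- Scherk's theorem. Dyson's transform at an `e ∈ A` with `e + b ∉ A` preserves the hypotheses and
strictly shrinks `B`. -/
theorem card_add_card_le_of_add_eq_zero_imp [DecidableEq G] (A B : Finset G) (hA : 0 ∈ A)
    (hB : 0 ∈ B) (hAB : ∀ a ∈ A, ∀ b ∈ B, a + b = 0 → b = 0) : #A + #B ≤ #(A + B) + 1 := by
  induction B using Finset.strongInduction generalizing A with
  | H B ih =>
  by_cases hB0 : B = {0}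
  · simp [hB0]
  obtain ⟨b, hb, hb0⟩ : ∃ b ∈ B, b ≠ 0 := by
    by_contra! h
    exact hB0 (eq_singleton_iff_unique_mem.2 ⟨hB, h⟩)
  obtain ⟨e, he, heb⟩ :=
    exists_add_notMem_of_neg_notMem hA fun h => hb0 (hAB _ h b hb (neg_add_cancel b))
  have hmem (y : G) : y ∈ B ∩ (-e +ᵥ A) ↔ y ∈ B ∧ e + y ∈ A := by
    rw [mem_inter, ← neg_vadd_mem_iff, neg_neg, vadd_eq_add]
  have hlt : B ∩ (-e +ᵥ A) ⊂ B :=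
    ⟨inter_subset_left, fun h => heb ((hmem b).1 (h hb)).2⟩
  have htransform := ih _ hlt (A ∪ (e +ᵥ B)) (mem_union_left _ hA)
    ((hmem 0).2 ⟨hB, by simpa using he⟩) fun x hx y hy hxy => by
      obtain ⟨hyB, hyA⟩ := (hmem y).1 hy
      rcases mem_union.1 hx with hx | hx
      · exact hAB x hx y hyB hxy
      · obtain ⟨b', hb', rfl⟩ := mem_vadd_finset.1 hx
        rw [vadd_eq_add] at hxy
        have hb'0 : b' = 0 := hAB _ hyA b' hb' (by rw [← hxy]; abel)
        exact hAB e he y hyB (by simpa [hb'0] using hxy)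
  have hcard := addDysonETransform.card e (A, B)
  have hsub := card_le_card (addDysonETransform.subset e (A, B))
  simp only [addDysonETransform] at hcard hsub
  omega

end Scherk

section SubsetSums

variable {ι G : Type*} [AddCommGroup G] [DecidableEq G] {F : ι → G} {A B J K : Finset ι}
  {i j k : ι}

theorem mem_subsetSums {z : G} : z ∈ subsetSums F J ↔ ∃ S ⊆ J, ∑ i ∈ S, F i = z := by
  simp [subsetSums]

theorem sum_mem_subsetSums (hK : K ⊆ J) : ∑ i ∈ K, F i ∈ subsetSums F J :=
  mem_subsetSums.2 ⟨K, hK, rfl⟩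

theorem zero_mem_subsetSums (F : ι → G) (J : Finset ι) : 0 ∈ subsetSums F J := by
  simpa using sum_mem_subsetSums (F := F) (empty_subset J)

theorem mem_subsetSums_of_mem (hi : i ∈ J) : F i ∈ subsetSums F J := by
  simpa using sum_mem_subsetSums (F := F) (singleton_subset_iff.2 hi)

theorem add_mem_subsetSums (hi : i ∈ J) (hj : j ∈ J) (hij : i ≠ j) :
    F i + F j ∈ subsetSums F J := by
  classical
  simpa [sum_pair hij] using
    sum_mem_subsetSums (F := F) (K := {i, j}) (J := J) (by simp [insert_subset_iff, hi, hj])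

theorem add_add_mem_subsetSums (hi : i ∈ J) (hj : j ∈ J) (hk : k ∈ J)
    (hij : i ≠ j) (hik : i ≠ k) (hjk : j ≠ k) : F i + F j + F k ∈ subsetSums F J := by
  classical
  simpa [sum_insert, hij, hik, hjk, add_assoc] using
    sum_mem_subsetSums (F := F) (K := {i, j, k}) (J := J)
      (by simp [insert_subset_iff, hi, hj, hk])

theorem nsmul_mem_subsetSums {g : G} {m : ℕ} (hJ : ∀ i ∈ J, F i = g) (hm : m ≤ #J) :
    m • g ∈ subsetSums F J := by
  obtain ⟨S, hS, rfl⟩ := exists_subset_card_eq hm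
  rw [← sum_const, ← sum_congr rfl fun i hi => hJ i (hS hi)]
  exact sum_mem_subsetSums hS

theorem subsetSums_union [DecidableEq ι] (hd : Disjoint A B) :
    subsetSums F (A ∪ B) = subsetSums F A + subsetSums F B := by
  ext z
  simp only [mem_add, mem_subsetSums]
  constructor
  · rintro ⟨S, hS, rfl⟩
    refine ⟨_, ⟨S ∩ A, inter_subset_right, rfl⟩, _, ⟨S ∩ B, inter_subset_right, rfl⟩, ?_⟩
    rw [← sum_union (hd.mono inter_subset_right inter_subset_right), ← inter_union_distrib_left,
      inter_eq_left.2 hS]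
  · rintro ⟨_, ⟨S, hS, rfl⟩, _, ⟨S', hS', rfl⟩, rfl⟩
    exact ⟨S ∪ S', union_subset_union hS hS', sum_union (hd.mono hS hS')⟩

namespace ZeroSumFree

theorem neg_sum_notMem_subsetSums [DecidableEq ι] (h : ZeroSumFree F (A ∪ B)) (hd : Disjoint A B)
    (hB : B.Nonempty) : -∑ i ∈ B, F i ∉ subsetSums F A := by
  intro hmem
  obtain ⟨S, hS, hsum⟩ := mem_subsetSums.1 hmem
  refine h.sum_ne_zero (union_subset_union_left hS) (hB.mono subset_union_right) ?_
  rw [sum_union (hd.mono_left hS), hsum, neg_add_cancel]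

theorem card_subsetSums_add_card_subsetSums_le [DecidableEq ι] (h : ZeroSumFree F (A ∪ B))
    (hd : Disjoint A B) :
    #(subsetSums F A) + #(subsetSums F B) ≤ #(subsetSums F (A ∪ B)) + 1 := by
  rw [subsetSums_union hd]
  refine card_add_card_le_of_add_eq_zero_imp _ _ (zero_mem_subsetSums F A)
    (zero_mem_subsetSums F B) fun a ha b hb hab => ?_
  obtain ⟨S, hS, rfl⟩ := mem_subsetSums.1 hb
  rcases S.eq_empty_or_nonempty with rfl | hne
  · exact sum_empty
  · rw [eq_neg_of_add_eq_zero_left hab] at ha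
    exact absurd ha ((h.mono (union_subset_union_right hS)).neg_sum_notMem_subsetSums
      (hd.mono_right hS) hne)

theorem two_le_card_subsetSums (h : ZeroSumFree F J) (hi : i ∈ J) : 2 ≤ #(subsetSums F J) :=
  one_lt_card.2 ⟨0, zero_mem_subsetSums F J, F i, mem_subsetSums_of_mem hi, (h.ne_zero hi).symm⟩

theorem four_le_card_subsetSums (h : ZeroSumFree F J) (hi : i ∈ J) (hj : j ∈ J)
    (hij : F i ≠ F j) : 4 ≤ #(subsetSums F J) := by
  have hij' : i ≠ j := ne_of_apply_ne F hij
  have hsub : {0, F i, F j, F i + F j} ⊆ subsetSums F J := by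
    simp [insert_subset_iff, zero_mem_subsetSums, mem_subsetSums_of_mem, add_mem_subsetSums,
      hi, hj, hij']
  have hcard : #{0, F i, F j, F i + F j} = 4 := by
    simp [card_insert_of_notMem, hij, (h.ne_zero hi).symm, (h.ne_zero hj).symm, h.ne_zero hi,
      h.ne_zero hj, (h.add_ne_zero hi hj hij').symm]
  exact hcard ▸ card_le_card hsub

theorem six_le_card_subsetSums_of_add_ne (h : ZeroSumFree F J) (hi : i ∈ J) (hj : j ∈ J)
    (hk : k ∈ J) (hij : F i ≠ F j) (hik : F i ≠ F k) (hjk : F j ≠ F k) (hijk : F i + F j ≠ F k) :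
    6 ≤ #(subsetSums F J) := by
  have hij' : i ≠ j := ne_of_apply_ne F hij
  have hik' : i ≠ k := ne_of_apply_ne F hik
  have hjk' : j ≠ k := ne_of_apply_ne F hjk
  have hsub : {0, F i, F j, F k, F i + F j, F i + F j + F k} ⊆ subsetSums F J := by
    simp [insert_subset_iff, zero_mem_subsetSums, mem_subsetSums_of_mem, add_mem_subsetSums,
      add_add_mem_subsetSums, hi, hj, hk, hij', hik', hjk']
  have hcard : #{0, F i, F j, F k, F i + F j, F i + F j + F k} = 6 := by
    have hiz := h.ne_zero hi
    have hjz := h.ne_zero hj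
    have hkz := h.ne_zero hk
    have hs₁ : F i ≠ F i + F j + F k := by
      simpa [add_assoc] using h.add_ne_zero hj hk hjk'
    have hs₂ : F j ≠ F i + F j + F k := by
      simpa [add_comm (F i), add_assoc] using h.add_ne_zero hi hk hik'
    simp [card_insert_of_notMem, hij, hik, hjk, hiz, hjz, hkz, hiz.symm, hjz.symm, hkz.symm,
      hijk.symm, hs₁, hs₂, (h.add_ne_zero hi hj hij').symm, h.add_ne_zero hi hj hij',
      (h.add_add_ne_zero hi hj hk hij' hik' hjk').symm]
  exact hcard ▸ card_le_card hsub

theorem six_le_card_subsetSums (h : ZeroSumFree F J) (hi : i ∈ J) (hj : j ∈ J) (hk : k ∈ J)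
    (hij : F i ≠ F j) (hik : F i ≠ F k) (hjk : F j ≠ F k) : 6 ≤ #(subsetSums F J) := by
  by_contra hcard
  have hk_eq : F i + F j = F k := by
    by_contra hne
    exact hcard (h.six_le_card_subsetSums_of_add_ne hi hj hk hij hik hjk hne)
  have hj_eq : F i + F k = F j := by
    by_contra hne
    exact hcard (h.six_le_card_subsetSums_of_add_ne hi hk hj hik hij hjk.symm hne)
  have hi_eq : F j + F k = F i := by
    by_contra hne
    exact hcard (h.six_le_card_subsetSums_of_add_ne hj hk hi hjk hij.symm hik.symm hne)
  refine h.add_add_ne_zero hi hj hk (ne_of_apply_ne F hij) (ne_of_apply_ne F hik)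
    (ne_of_apply_ne F hjk) ?_
  calc F i + F j + F k = (F i + F k) + (F j + F k) - F k := by abel
    _ = F i + F j - F k := by rw [hj_eq, hi_eq, add_comm]
    _ = 0 := by rw [hk_eq, sub_self]

theorem card_lt_card_subsetSums (h : ZeroSumFree F J) : #J < #(subsetSums F J) := by
  classical
  induction J using Finset.induction_on with
  | empty => exact card_pos.2 ⟨0, zero_mem_subsetSums F ∅⟩
  | insert i J hi ih =>
    have hJ := ih (h.mono (subset_insert i J))
    have hi₂ := (h.mono (by simp : {i} ⊆ insert i J)).two_le_card_subsetSums (mem_singleton_self i)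
    rw [card_insert_of_notMem hi]
    rw [insert_eq] at h ⊢
    have hle := h.card_subsetSums_add_card_subsetSums_le (disjoint_singleton_left.2 hi)
    omega

theorem card_subsetSums_sdiff_pair_add_three_le [DecidableEq ι] (h : ZeroSumFree F J)
    (hi : i ∈ J) (hj : j ∈ J) (hij : F i ≠ F j) :
    #(subsetSums F (J \ {i, j})) + 3 ≤ #(subsetSums F J) := by
  have hsub : {i, j} ⊆ J := by simp [insert_subset_iff, hi, hj]
  have hunion : J \ {i, j} ∪ {i, j} = J := sdiff_union_of_subset hsub
  have hpair : 4 ≤ #(subsetSums F {i, j}) :=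
    (h.mono hsub).four_le_card_subsetSums (by simp) (by simp) hij
  have hle := (hunion.symm ▸ h).card_subsetSums_add_card_subsetSums_le sdiff_disjoint
  rw [hunion] at hle
  omega

end ZeroSumFree

end SubsetSums

section FrequentValues

theorem exists_ne_forall_card_fiber_sdiff_lt {ι α : Type*} [DecidableEq ι] [DecidableEq α]
    {f : ι → α} {J : Finset ι} {q : ℕ} (hq : ∀ a, #{i ∈ J | f i = a} ≤ q) (hqJ : q < #J)
    (hJq : #J < 3 * q) :
    ∃ i ∈ J, ∃ j ∈ J, f i ≠ f j ∧ ∀ a, #{k ∈ J \ {i, j} | f k = a} < q := by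
  set V : Finset α := {a ∈ J.image f | #{i ∈ J | f i = a} = q}
  have hV₂ : #V ≤ 2 := by
    have hle : #V * q ≤ #J := calc
      #V * q ≤ ∑ a ∈ V, #{i ∈ J | f i = a} :=
        card_nsmul_le_sum _ _ _ fun a ha => (mem_filter.1 ha).2.ge
      _ ≤ #J := by
        rw [sum_card_fiberwise_eq_card_filter]
        exact card_filter_le _ _
    by_contra! h
    nlinarith
  have himage : 2 ≤ #(J.image f) := by
    have hle := card_le_mul_card_image J q fun a _ => hq a
    by_contra! h
    nlinarith
  obtain ⟨U, hVU, hU, hU₂⟩ := exists_subsuperset_card_eq (filter_subset _ _) hV₂ himage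
  obtain ⟨a, b, hab, rfl⟩ := card_eq_two.1 hU₂
  obtain ⟨i, hi, rfl⟩ := mem_image.1 (hU (mem_insert_self _ _))
  obtain ⟨j, hj, rfl⟩ := mem_image.1 (hU (mem_insert_of_mem (mem_singleton_self _)))
  refine ⟨i, hi, j, hj, hab, fun a => ?_⟩
  by_cases ha : #{k ∈ J | f k = a} = q
  · obtain ⟨k, hk⟩ : {k ∈ J | f k = a}.Nonempty := card_pos.1 (by omega)
    have haV : a ∈ V := mem_filter.2 ⟨mem_image.2 ⟨k, mem_filter.1 hk⟩, ha⟩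
    obtain ⟨l, hl, hlJ, rfl⟩ : ∃ l ∈ ({i, j} : Finset ι), l ∈ J ∧ f l = a := by
      rcases mem_insert.1 (hVU haV) with rfl | h
      · exact ⟨i, by simp, hi, rfl⟩
      · exact ⟨j, by simp, hj, (mem_singleton.1 h).symm⟩
    rw [← ha]
    refine card_lt_card ⟨filter_subset_filter _ sdiff_subset, fun h => ?_⟩
    exact (mem_sdiff.1 (mem_filter.1 (h (mem_filter.2 ⟨hlJ, rfl⟩))).1).2 hl
  · exact (card_le_card (filter_subset_filter _ sdiff_subset)).trans_lt ((hq a).lt_of_ne ha)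

variable {ι G : Type*} [AddCommGroup G] [DecidableEq G] {F : ι → G} {J : Finset ι}

/-- As long as no value is too frequent, pairs of terms with distinct values can be split off; each
of them accounts for three nonzero sums, that is, for one more than its length. -/
theorem ZeroSumFree.card_add_lt_card_subsetSums (h : ZeroSumFree F J) {p : ℕ}
    (hp : 2 * p ≤ #J + 1) (hF : ∀ g, #{i ∈ J | F i = g} + p ≤ #J) :
    #J + p < #(subsetSums F J) := by
  classical
  induction p generalizing J with
  | zero => exact h.card_lt_card_subsetSums
  | succ p ih =>
    have hfiber {i : ι} (hi : i ∈ J) : 0 < #{k ∈ J | F k = F i} :=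
      card_pos.2 ⟨i, mem_filter.2 ⟨hi, rfl⟩⟩
    obtain ⟨i, hi⟩ : J.Nonempty := card_pos.1 (by omega)
    have hJ : 1 < #J := by
      have := hF (F i)
      have := hfiber hi
      omega
    by_cases h3 : p = 1 ∧ #J = 3
    · obtain ⟨rfl, h3⟩ := h3
      have hinj {i j : ι} (hi : i ∈ J) (hj : j ∈ J) (hij : i ≠ j) : F i ≠ F j := fun heq =>
        hij (card_le_one.1 (show #{k ∈ J | F k = F j} ≤ 1 by have := hF (F j); omega) i
          (mem_filter.2 ⟨hi, heq⟩) j (mem_filter.2 ⟨hj, rfl⟩))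
      obtain ⟨i, j, k, hi, hj, hk, hij, hik, hjk⟩ := two_lt_card_iff.1 (show 2 < #J by omega)
      have := h.six_le_card_subsetSums hi hj hk (hinj hi hj hij) (hinj hi hk hik) (hinj hj hk hjk)
      omega
    obtain ⟨i, hi, j, hj, hij, hlt⟩ := exists_ne_forall_card_fiber_sdiff_lt
      (q := #J - (p + 1)) (fun g => Nat.le_sub_of_add_le (hF g)) (by omega) (by omega)
    have hcard : #(J \ {i, j}) + 2 = #J := by
      rw [← card_pair (ne_of_apply_ne F hij)]
      exact card_sdiff_add_card_eq_card (by simp [insert_subset_iff, hi, hj])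
    have hle := h.card_subsetSums_sdiff_pair_add_three_le hi hj hij
    have := ih (h.mono (sdiff_subset (t := {i, j}))) (by omega)
      fun g => by have := hlt g; omega
    omega

end FrequentValues

section IndexTwo

variable {ι G : Type*} [AddCommGroup G] {F : ι → G} {J : Finset ι}

theorem ZeroSumFree.sum_notMem_of_subset_subsetSums [DecidableEq G] [DecidableEq ι]
    {A B : Finset ι} {H : AddSubgroup G} (h : ZeroSumFree F (A ∪ B)) (hd : Disjoint A B)
    (hB : B.Nonempty) (hH : (H : Set G) ⊆ subsetSums F A) : ∑ i ∈ B, F i ∉ H :=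
  fun hmem => h.neg_sum_notMem_subsetSums hd hB (hH (H.neg_mem hmem))

theorem zmultiples_subset_subsetSums [DecidableEq G] {g : G} (hJ : ∀ i ∈ J, F i = g)
    (hg : IsOfFinAddOrder g) (hcard : addOrderOf g ≤ #J + 1) :
    (AddSubgroup.zmultiples g : Set G) ⊆ subsetSums F J := by
  intro z hz
  obtain ⟨m, hm, rfl⟩ := mem_image.1 (hg.mem_zmultiples_iff_mem_range_addOrderOf.1 hz)
  exact nsmul_mem_subsetSums hJ (by have := mem_range.1 hm; omega)

/-- A value of smaller order has order `n / 2`, with `n` the order of the group, and its multiples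
fill a subgroup of index two. This leaves room for at most one further term. -/
theorem ZeroSumFree.addOrderOf_eq_natCard [Finite G] [DecidableEq G] (h : ZeroSumFree F J) {g : G}
    (hg : Nat.card G ≤ 2 * #{i ∈ J | F i = g} + 2)
    (hJ : Nat.card G ≤ #{i ∈ J | F i = g} + #J) : addOrderOf g = Nat.card G := by
  classical
  set A := {i ∈ J | F i = g}
  set H := AddSubgroup.zmultiples g
  have hAJ : A ⊆ J := filter_subset _ _
  have hAg : ∀ i ∈ A, F i = g := fun i hi => (mem_filter.1 hi).2
  have hfin : IsOfFinAddOrder g := isOfFinAddOrder_of_finite g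
  have hlt : #A < addOrderOf g := (h.mono hAJ).card_lt_addOrderOf hAg hfin
  have hmul : addOrderOf g * H.index = Nat.card G := by
    rw [← Nat.card_zmultiples, H.card_mul_index]
  by_contra hne
  have hindex : H.index = 2 := by
    have h₁ : H.index ≠ 1 := fun h₁ => hne (by rwa [h₁, mul_one] at hmul)
    have h₀ : H.index ≠ 0 := H.index_ne_zero_of_finite
    have : H.index < 3 := by
      by_contra! h₃
      have := Nat.mul_le_mul_left (addOrderOf g) h₃
      omega
    omega
  rw [hindex] at hmul
  have hH : (H : Set G) ⊆ subsetSums F A := zmultiples_subset_subsetSums hAg hfin (by omega)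
  have hsum {B : Finset ι} (hB : B ⊆ J \ A) (hne : B.Nonempty) : ∑ i ∈ B, F i ∉ H :=
    (h.mono (union_subset hAJ (hB.trans sdiff_subset))).sum_notMem_of_subset_subsetSums
      (disjoint_sdiff.mono_right hB) hne hH
  obtain ⟨i, hi, j, hj, hij⟩ : ∃ i ∈ J \ A, ∃ j ∈ J \ A, i ≠ j := by
    rw [← one_lt_card, card_sdiff_of_subset hAJ]
    omega
  have hFi : F i ∉ H := by simpa using hsum (singleton_subset_iff.2 hi) (singleton_nonempty i)
  have hFj : F j ∉ H := by simpa using hsum (singleton_subset_iff.2 hj) (singleton_nonempty j)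
  refine hsum (B := {i, j}) (insert_subset hi (singleton_subset_iff.2 hj)) (by simp) ?_
  rw [sum_pair hij, AddSubgroup.add_mem_iff_of_index_two hindex]
  exact iff_of_false hFi hFj

theorem ZeroSumFree.exists_addOrderOf_eq_four [IsAddCyclic G] (h : ZeroSumFree F J)
    (hG : Nat.card G = 4) (hJ : #J = 2) : ∃ i ∈ J, addOrderOf (F i) = 4 := by
  classical
  have : Finite G := Nat.finite_of_card_ne_zero (by omega)
  have : Fintype G := Fintype.ofFinite G
  by_contra! hne
  have htwo {i : ι} (hi : i ∈ J) : 2 • F i = 0 := by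
    have hdvd : addOrderOf (F i) ∣ 2 ^ 2 :=
      (addOrderOf_dvd_natCard (F i)).trans (hG ▸ dvd_rfl)
    obtain ⟨m, hm, heq⟩ := (Nat.dvd_prime_pow Nat.prime_two).1 hdvd
    have : m ≠ 2 := by
      rintro rfl
      exact hne i hi heq
    rw [← addOrderOf_dvd_iff_nsmul_eq_zero, heq]
    exact pow_dvd_pow 2 (show m ≤ 1 by omega)
  obtain ⟨i, j, hij, rfl⟩ := card_eq_two.1 hJ
  have hi : i ∈ ({i, j} : Finset ι) := by simp
  have hj : j ∈ ({i, j} : Finset ι) := by simp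
  have hFij : F i ≠ F j := fun heq => h.add_ne_zero hi hj hij (by rw [← heq, ← two_nsmul, htwo hi])
  have hsub : {0, F i, F j} ⊆ ({x | 2 • x = 0} : Finset G) := by
    simp [insert_subset_iff, htwo hi, htwo hj]
  have hcard : #{0, F i, F j} = 3 :=
    card_eq_three.2 ⟨0, F i, F j, (h.ne_zero hi).symm, (h.ne_zero hj).symm, hFij, rfl⟩
  have hle : #({x | 2 • x = 0} : Finset G) ≤ 2 := IsAddCyclic.card_nsmul_eq_zero_le two_pos
  have := card_le_card hsub
  omega

theorem ZeroSumFree.exists_le_card_fiber [Finite G] [DecidableEq G] (h : ZeroSumFree F J) {δ : ℕ}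
    (hδ : 3 * δ ≤ Nat.card G + 1) (hJ : #J + δ = Nat.card G) :
    ∃ g, Nat.card G < #{i ∈ J | F i = g} + 2 * δ := by
  by_contra! hF
  have hlt := h.card_add_lt_card_subsetSums (p := δ) (by omega) fun g => by
    have := hF g
    omega
  have := Fintype.ofFinite G
  have := Nat.card_eq_fintype_card (α := G) ▸ card_le_univ (subsetSums F J)
  omega

/-- A theorem of Bovey, Erdős and Niven. -/
theorem ZeroSumFree.exists_addOrderOf_eq_natCard_and_lt [Finite G] [DecidableEq G]
    (hG : Nat.card G = 4 → IsAddCyclic G) (h : ZeroSumFree F J) {δ : ℕ}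
    (hδ : 4 * δ ≤ Nat.card G + 4) (hJ : #J + δ = Nat.card G) :
    ∃ g, addOrderOf g = Nat.card G ∧ Nat.card G < #{i ∈ J | F i = g} + 2 * δ := by
  have hpos : 0 < Nat.card G := Nat.card_pos
  by_cases hδ' : 3 * δ ≤ Nat.card G + 1
  · obtain ⟨g, hg⟩ := h.exists_le_card_fiber hδ' hJ
    exact ⟨g, h.addOrderOf_eq_natCard (by omega) (by omega), hg⟩
  obtain ⟨h₁, rfl⟩ | ⟨h₄, rfl⟩ : Nat.card G = 1 ∧ δ = 1 ∨ Nat.card G = 4 ∧ δ = 2 := by omega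
  · exact ⟨0, by rw [addOrderOf_zero, h₁], by omega⟩
  · have := hG h₄
    obtain ⟨i, hi, hFi⟩ := h.exists_addOrderOf_eq_four h₄ (by omega)
    have hfiber : 0 < #{k ∈ J | F k = F i} := card_pos.2 ⟨i, mem_filter.2 ⟨hi, rfl⟩⟩
    exact ⟨F i, by rw [hFi, h₄], by omega⟩

end IndexTwo

section Coefficients

variable {ι G : Type*} [AddCommGroup G] {F : ι → G} {J : Finset ι} {g : G}
  {i : ι} {c m : ℕ}

theorem ZeroSumFree.add_lt_addOrderOf [DecidableEq G] [DecidableEq ι]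
    (h : ZeroSumFree F (insert i J)) (hi : i ∉ J) (hJ : ∀ k ≤ m, k • g ∈ subsetSums F J)
    (hFi : F i = c • g) (hc : c ≤ addOrderOf g) : m + c < addOrderOf g := by
  by_contra! hle
  rw [insert_eq, union_comm] at h
  refine h.neg_sum_notMem_subsetSums (disjoint_singleton_right.2 hi) (singleton_nonempty i) ?_
  have hneg : -F i = (addOrderOf g - c) • g := by
    rw [hFi, neg_eq_iff_add_eq_zero, ← add_nsmul, Nat.add_sub_cancel' hc, addOrderOf_nsmul_eq_zero]
  rw [sum_singleton, hneg]
  exact hJ _ (by omega)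

theorem nsmul_mem_subsetSums_insert [DecidableEq G] [DecidableEq ι] (hi : i ∉ J)
    (hJ : ∀ k ≤ m, k • g ∈ subsetSums F J) (hFi : F i = c • g) (hc : c ≤ m + 1) :
    ∀ k ≤ m + c, k • g ∈ subsetSums F (insert i J) := by
  intro k hk
  rw [insert_eq, subsetSums_union (disjoint_singleton_left.2 hi)]
  by_cases hkm : k ≤ m
  · simpa using add_mem_add (zero_mem_subsetSums F {i}) (hJ k hkm)
  · have hsplit : k • g = F i + (k - c) • g := by
      rw [hFi, ← add_nsmul, Nat.add_sub_cancel' (by omega)]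
    rw [hsplit]
    exact add_mem_add (mem_subsetSums_of_mem (mem_singleton_self i)) (hJ _ (by omega))

/-- With about half as many copies of `g` as the order of `g`, adding the remaining terms one by one
never leaves a gap between the multiples of `g` that are subset sums. -/
theorem ZeroSumFree.card_add_sum_lt_addOrderOf [DecidableEq ι] {A B : Finset ι}
    (h : ZeroSumFree F (A ∪ B)) (hd : Disjoint A B) (hA : ∀ i ∈ A, F i = g)
    (hg : IsOfFinAddOrder g) (hcard : addOrderOf g ≤ 2 * #A + 2) {c : ι → ℕ}
    (hB : ∀ i ∈ B, F i = c i • g) (hc : ∀ i ∈ B, c i ≤ addOrderOf g) :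
    #A + ∑ i ∈ B, c i < addOrderOf g := by
  classical
  suffices #A + ∑ i ∈ B, c i < addOrderOf g ∧
    ∀ k ≤ #A + ∑ i ∈ B, c i, k • g ∈ subsetSums F (A ∪ B) from this.1
  induction B using Finset.induction_on with
  | empty =>
    rw [union_empty] at h ⊢
    exact ⟨by simpa using h.card_lt_addOrderOf hA hg, fun k hk => nsmul_mem_subsetSums hA hk⟩
  | insert i B hi ih =>
    rw [union_insert] at h ⊢
    obtain ⟨hiA, hdB⟩ := disjoint_insert_right.1 hd
    have hiAB : i ∉ A ∪ B := by simp [hiA, hi]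
    obtain ⟨-, hsums⟩ := ih (h.mono (subset_insert _ _)) hdB
      (fun k hk => hB k (mem_insert_of_mem hk)) (fun k hk => hc k (mem_insert_of_mem hk))
    have hFi := hB i (mem_insert_self i B)
    have hlt := h.add_lt_addOrderOf hiAB hsums hFi (hc i (mem_insert_self i B))
    rw [sum_insert hi, add_comm (c i), ← add_assoc]
    exact ⟨hlt, nsmul_mem_subsetSums_insert hiAB hsums hFi (by omega)⟩

theorem exists_lt_nsmul_eq [Finite G] (hg : addOrderOf g = Nat.card G) (z : G) :
    ∃ c < Nat.card G, c • g = z := by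
  classical
  have htop : AddSubgroup.zmultiples g = ⊤ :=
    AddSubgroup.eq_top_of_card_eq _ (by rw [Nat.card_zmultiples, hg])
  have hz : z ∈ AddSubgroup.zmultiples g := htop ▸ AddSubgroup.mem_top z
  obtain ⟨c, hc, rfl⟩ := mem_image.1
    ((isOfFinAddOrder_of_finite g).mem_zmultiples_iff_mem_range_addOrderOf.1 hz)
  exact ⟨c, hg ▸ mem_range.1 hc, rfl⟩

theorem ZeroSumFree.exists_generator_sum_coeff_le [Finite G] [DecidableEq ι]
    (hG : Nat.card G = 4 → IsAddCyclic G) (h : ZeroSumFree F J) {δ : ℕ}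
    (hδ : 4 * δ ≤ Nat.card G + 4) (hJ : #J + δ = Nat.card G) :
    ∃ g, addOrderOf g = Nat.card G ∧ ∃ A ⊆ J, #A + 2 * δ = Nat.card G + 1 ∧ (∀ i ∈ A, F i = g) ∧
      ∃ c : ι → ℕ, (∀ i, F i = c i • g) ∧ ∑ i ∈ J \ A, c i + 2 ≤ 2 * δ := by
  classical
  have hpos : 0 < Nat.card G := Nat.card_pos
  obtain ⟨g, hg, hlt⟩ := h.exists_addOrderOf_eq_natCard_and_lt hG hδ hJ
  obtain ⟨A, hA, hAcard⟩ := exists_subset_card_eq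
    (show Nat.card G + 1 - 2 * δ ≤ #{i ∈ J | F i = g} by omega)
  have hAJ : A ⊆ J := hA.trans (filter_subset _ _)
  have hAg : ∀ i ∈ A, F i = g := fun i hi => (mem_filter.1 (hA hi)).2
  choose c hc hcF using fun i => exists_lt_nsmul_eq hg (F i)
  have hsum := (union_sdiff_of_subset hAJ ▸ h).card_add_sum_lt_addOrderOf disjoint_sdiff hAg
    (isOfFinAddOrder_of_finite g) (by omega) (fun i _ => (hcF i).symm) (fun i _ => hg ▸ (hc i).le)
  exact ⟨g, hg, A, hAJ, by omega, hAg, c, fun i => (hcF i).symm, by omega⟩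

end Coefficients

section Multisets

variable {ι α : Type*}

theorem exists_fin_embedding_map_univ_eq {k : ℕ} {s : Finset α} (hs : #s = k) :
    ∃ e : Fin k ↪ α, univ.map e = s :=
  ⟨(s.equivFinOfCardEq hs).symm.toEmbedding.trans (Function.Embedding.subtype _), by
    rw [← map_map, map_univ_equiv, univ_eq_attach, attach_map_val]⟩

theorem map_univ_val_eq_add_add [Fintype ι] [DecidableEq ι] (T : ι → α) {A B : Finset ι}
    (hAB : Disjoint A B) :
    univ.val.map T = A.val.map T + B.val.map T + (A ∪ B)ᶜ.val.map T := by
  rw [← Multiset.map_add, ← Multiset.map_add, ← disjUnion_val A B hAB, disjUnion_eq_union,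
    ← disjUnion_val _ _ disjoint_compl_right, disjUnion_eq_union, union_compl]

theorem map_val_eq_replicate_add_replicate [DecidableEq α] {T : ι → α} {A : Finset ι} {a b : α}
    (hA : ∀ i ∈ A, T i = a ∨ T i = b) :
    A.val.map T =
      Multiset.replicate #{i ∈ A | T i = a} a + Multiset.replicate #{i ∈ A | T i ≠ a} b := by
  have hconst {p : ι → Prop} [DecidablePred p] {x : α} (h : ∀ i ∈ A, p i → T i = x) :
      (A.filter p).val.map T = Multiset.replicate #(A.filter p) x :=
    Multiset.eq_replicate.2 ⟨Multiset.card_map _ _, by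
      rintro _ hb
      obtain ⟨i, hi, rfl⟩ := Multiset.mem_map.1 hb
      exact h i (mem_filter.1 hi).1 (mem_filter.1 hi).2⟩
  rw [← hconst fun _ _ h => h, ← hconst fun i hi h => (hA i hi).resolve_left h,
    ← Multiset.map_add, filter_val, filter_val, Multiset.filter_add_not]

theorem exists_map_val_eq_replicate_add_replicate_neg {G : Type*} [InvolutiveNeg G] {T : ι → G}
    {A : Finset ι} {g : G} (hA : ∀ i ∈ A, T i = g ∨ T i = -g) :
    ∃ h, (h = g ∨ h = -g) ∧ ∃ u v, v ≤ u ∧ u + v = #A ∧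
      A.val.map T = Multiset.replicate u h + Multiset.replicate v (-h) := by
  classical
  have hcard := card_filter_add_card_filter_not (s := A) (T · = g)
  have hmap := map_val_eq_replicate_add_replicate hA
  rcases le_total #{i ∈ A | T i ≠ g} #{i ∈ A | T i = g} with hle | hle
  · exact ⟨g, .inl rfl, _, _, hle, hcard, hmap⟩
  · exact ⟨-g, .inr rfl, _, _, hle, by rw [add_comm, hcard], by rw [neg_neg, add_comm, hmap]⟩

end Multisets

section Structure

variable {ι G : Type*} [AddCommGroup G]

theorem exists_zsmul_eq_and_abs_le {g : G} (hg : IsOfFinAddOrder g) (z : ℤ) :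
    ∃ x : ℤ, -(addOrderOf g : ℤ) < 2 * x ∧ 2 * x ≤ addOrderOf g ∧ |x| ≤ |z| ∧ x • g = z • g := by
  have : NeZero (addOrderOf g) := ⟨hg.addOrderOf_pos.ne'⟩
  have hx : (((z : ZMod (addOrderOf g)).valMinAbs : ℤ) : ZMod (addOrderOf g)) = z :=
    ZMod.coe_valMinAbs _
  obtain ⟨hlt, hle⟩ := ZMod.valMinAbs_mem_Ioc (z : ZMod (addOrderOf g))
  refine ⟨_, by linarith, by linarith, ?_, ?_⟩
  · rw [Int.abs_eq_natAbs, Int.abs_eq_natAbs, Nat.cast_le]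
    exact (ZMod.natAbs_min_of_le_div_two _ _ _ hx (ZMod.natAbs_valMinAbs_le _))
  · exact zsmul_eq_zsmul_iff_modEq.2 ((ZMod.intCast_eq_intCast_iff _ _ _).1 hx)

theorem exists_abs_eq_and_eq_zsmul {g h t : G} {c : ℕ} (hh : h = g ∨ h = -g)
    (ht : t = c • g ∨ t = -(c • g)) : ∃ z : ℤ, |z| = c ∧ t = z • h := by
  rcases hh with rfl | rfl <;> rcases ht with rfl | rfl
  · exact ⟨c, by simp⟩
  · exact ⟨-c, by simp⟩
  · exact ⟨-c, by simp⟩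
  · exact ⟨c, by simp⟩

theorem exists_units_smul_zeroSumFree_card_add_eq [Fintype ι] [Finite G] {δ : ℕ}
    (hδ : δ ≤ Nat.card G) {T : ι → G}
    (hN : Nat.card {S : Finset ι // ∑ i ∈ S, T i = 0} <
      2 ^ (Fintype.card ι + 1 + δ - Nat.card G)) :
    ∃ ε : ι → ℤˣ, ∃ J, ZeroSumFree (fun i => ε i • T i) J ∧ #J + δ = Nat.card G := by
  classical
  obtain ⟨ε, K, -, hfree, hle⟩ := exists_zeroSumFree_two_pow_card_le univ T
  have hcount : Nat.card {S : Finset ι // ∑ i ∈ S, T i = 0} = sumCount T univ 0 := by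
    rw [sumCount, powerset_univ, Nat.card_eq_fintype_card, Fintype.card_subtype]
  have hK : Nat.card G ≤ #K + δ := by
    have hlt := hle.trans_lt (Nat.mul_lt_mul_of_pos_left (hcount ▸ hN) (by positivity))
    rw [← pow_add, card_univ, Nat.pow_lt_pow_iff_right one_lt_two] at hlt
    have := card_le_univ K
    omega
  obtain ⟨J, hJ, hcard⟩ := exists_subset_card_eq (show Nat.card G - δ ≤ #K by omega)
  exact ⟨ε, J, hfree.mono hJ, by omega⟩

theorem exists_generator_sum_abs_coeff_le [Fintype ι] [Finite G]
    (hG : Nat.card G = 4 → IsAddCyclic G) {δ : ℕ} (hδ : 4 * (δ - 1) ≤ Nat.card G) {T : ι → G}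
    (hN : Nat.card {S : Finset ι // ∑ i ∈ S, T i = 0} <
      2 ^ (Fintype.card ι + 1 + δ - Nat.card G)) :
    ∃ g, addOrderOf g = Nat.card G ∧ ∃ A B : Finset ι, Disjoint A B ∧
      (∃ u v, v ≤ u ∧ u + v = #A ∧
        A.val.map T = Multiset.replicate u g + Multiset.replicate v (-g)) ∧
      #A + 2 * δ = Nat.card G + 1 ∧ #B + 1 = δ ∧ ∃ x : ι → ℤ,
        (∀ i, -(Nat.card G : ℤ) < 2 * x i ∧ 2 * x i ≤ Nat.card G) ∧ (∀ i, T i = x i • g) ∧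
        (∀ i ∈ B, x i ≠ 0) ∧ ∑ i ∈ B, |x i| ≤ 2 * (δ : ℤ) - 2 := by
  classical
  have hpos : 0 < Nat.card G := Nat.card_pos
  obtain ⟨ε, J, hfree, hJ⟩ := exists_units_smul_zeroSumFree_card_add_eq (by omega) hN
  obtain ⟨g, hg, A, hAJ, hA, hAg, c, hc, hsum⟩ :=
    hfree.exists_generator_sum_coeff_le hG (by omega) hJ
  have hsign {i : ι} {y : G} (h : ε i • T i = y) : T i = y ∨ T i = -y := by
    rcases Int.units_eq_one_or (ε i) with hε | hε
    · exact .inl (by simpa [hε] using h)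
    · exact .inr (by simpa [hε, neg_eq_iff_eq_neg] using h)
  obtain ⟨g', hg', u, v, huv, hcard, hmap⟩ :=
    exists_map_val_eq_replicate_add_replicate_neg fun i hi => hsign (hAg i hi)
  have horder : addOrderOf g' = Nat.card G := by rcases hg' with rfl | rfl <;> simpa using hg
  have hx (i : ι) : ∃ x : ℤ, (-(Nat.card G : ℤ) < 2 * x ∧ 2 * x ≤ Nat.card G) ∧
      T i = x • g' ∧ |x| ≤ c i := by
    obtain ⟨z, hz, hT⟩ := exists_abs_eq_and_eq_zsmul hg' (hsign (hc i))
    obtain ⟨x, hlt, hle, habs, hx⟩ := exists_zsmul_eq_and_abs_le (isOfFinAddOrder_of_finite g') z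
    exact ⟨x, horder ▸ ⟨hlt, hle⟩, hT.trans hx.symm, habs.trans hz.le⟩
  choose x hbound hT habs using hx
  refine ⟨g', horder, A, J \ A, disjoint_sdiff, ⟨u, v, huv, hcard, hmap⟩, hA, ?_, x, hbound, hT,
    fun i hi hxi => ?_, ?_⟩
  · have := card_sdiff_add_card_eq_card hAJ
    omega
  · exact hfree.ne_zero (mem_sdiff.1 hi).1 (by simp [hT i, hxi])
  · have := sum_le_sum fun i (_ : i ∈ J \ A) => habs i
    zify at hsum
    linarith

end Structure

theorem stmt19_general {ι G : Type*} [Fintype ι] [AddCommGroup G] [Finite G]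
    (hG : Nat.card G = 4 → IsAddCyclic G) (δ : ℕ) (hδ : 4 * (δ - 1) ≤ Nat.card G) (T : ι → G)
    (hN : Nat.card {S : Finset ι // ∑ i ∈ S, T i = 0} <
      2 ^ (Fintype.card ι + 1 + δ - Nat.card G)) :
    ∃ g : G, addOrderOf g = Nat.card G ∧
    ∃ u v w : ℕ, v ≤ u ∧ u + v + 2 * δ = Nat.card G + 1 ∧ w + Nat.card G = Fintype.card ι + δ ∧
    ∃ x : Fin (δ - 1) → ℤ, ∃ y : Fin w → ℤ,
      (∀ i, -(Nat.card G : ℤ) < 2 * x i ∧ 2 * x i ≤ (Nat.card G : ℤ) ∧ x i ≠ 0) ∧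
      (∀ j, -(Nat.card G : ℤ) < 2 * y j ∧ 2 * y j ≤ (Nat.card G : ℤ)) ∧
      (∑ i, |x i|) ≤ 2 * (δ : ℤ) - 2 ∧
      univ.val.map T =
        Multiset.replicate u g + Multiset.replicate v (-g) +
          Multiset.map (fun i => x i • g) univ.val +
          Multiset.map (fun j => y j • g) univ.val := by
  classical
  obtain ⟨g, hg, A, B, hAB, ⟨u, v, huv, hcard, hmap⟩, hA, hB, z, hz, hT, hz0, hsum⟩ :=
    exists_generator_sum_abs_coeff_le hG hδ hN
  obtain ⟨e, he⟩ := exists_fin_embedding_map_univ_eq (show #B = δ - 1 by omega)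
  obtain ⟨f, hf⟩ := exists_fin_embedding_map_univ_eq (s := (A ∪ B)ᶜ) rfl
  have hC : #(A ∪ B)ᶜ + #(A ∪ B) = Fintype.card ι := card_compl_add_card _
  rw [card_union_of_disjoint hAB] at hC
  have hval {k : ℕ} {s : Finset ι} {e : Fin k ↪ ι} (he : univ.map e = s) :
      s.val.map T = univ.val.map fun i => z (e i) • g := by
    simp only [← he, map_val, Multiset.map_map, Function.comp_apply, hT]
  have he' (i) : e i ∈ B := he ▸ mem_map_of_mem e (mem_univ i)
  refine ⟨g, hg, u, v, #(A ∪ B)ᶜ, huv, by omega, by omega, z ∘ e, z ∘ f,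
    fun i => ⟨(hz _).1, (hz _).2, hz0 _ (he' i)⟩, fun j => hz _, ?_, ?_⟩
  · rwa [← he, sum_map] at hsum
  · rw [map_univ_val_eq_add_add T hAB, hmap, hval he, hval hf]
    rfl

theorem stmt19 (n : ℕ) (hn : 1 ≤ n) (δ : ℕ) (hδ1 : 1 ≤ δ) (hδ2 : 4 * (δ - 1) ≤ n)
    (ℓ : ℕ) (T : Fin ℓ → ZMod n)
    (hN : Nat.card {S : Finset (Fin ℓ) // ∑ i ∈ S, T i = 0} < 2 ^ (ℓ + 1 + δ - n)) :
    ∃ g : ZMod n, addOrderOf g = n ∧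
    ∃ u v w : ℕ, v ≤ u ∧ u + v + 2 * δ = n + 1 ∧ w + n = ℓ + δ ∧
    ∃ x : Fin (δ - 1) → ℤ, ∃ y : Fin w → ℤ,
      (∀ i, -(n : ℤ) < 2 * x i ∧ 2 * x i ≤ (n : ℤ) ∧ x i ≠ 0) ∧
      (∀ j, -(n : ℤ) < 2 * y j ∧ 2 * y j ≤ (n : ℤ)) ∧
      (∑ i, |x i|) ≤ 2 * (δ : ℤ) - 2 ∧
      Finset.univ.val.map T =
        Multiset.replicate u g + Multiset.replicate v (-g) +
          Multiset.map (fun i => x i • g) Finset.univ.val +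
          Multiset.map (fun j => y j • g) Finset.univ.val := by
  have : NeZero n := ⟨by omega⟩
  simpa using stmt19_general (G := ZMod n) (fun _ => inferInstance) δ (by simpa using hδ2) T
    (by simpa using hN)
end
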